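/- Let m ≥ 1 and φ ∈ C^∞(ℝ²) be m-admissible, and let d be the CC distance of X = ∂_x + |z|^{2m} y ∂_t, Y = ∂_y − |z|^{2m} x ∂_t. Then there is C₀ > 0 such that for all points p = (z, φ(z)) and q = (ζ, φ(ζ)) on the graph of φ: C₀^{-1} d(p,q) ≤ |ζ − z| + | (φ(ζ) − φ(z))/μ^{2m} + (xη − yξ) |^{1/2} ≤ C₀ d(p,q), where μ = max{|z|, |ζ|} and z = (x,y), ζ = (ξ,η). -/

import Mathlib

/-!
The distance is compared directly with the expression on the graph, without the ball-box theorem.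
Write `z = (x, y)`, `ζ = (ξ, η)`, `A = xη - yξ`, `θ = (φ(ζ) - φ(z)) / μ^(2m) + A` and
`N = |ζ - z| + |θ|^(1/2)`. The height of a horizontal curve is the integral of the form
`|w|^(2m) (w₂ dw₁ - w₁ dw₂)` along its planar projection `w`.

*Lower bound for the distance* (`lower_bound`). Along a horizontal curve of length `L` the projection
stays within `O(L)` of `z`, so `|ζ - z| ≤ 2L`. If `L ≤ μ`, then `|w|^(2m) w` differs from `μ^(2m) z`
by `O(μ^(2m) L)` (`coeff_bound`), and integrating gives `|θ| = O(L²)`. If `L > μ`, then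
`|φ(ζ) - φ(z)| = O(μ^(2m+1) |ζ - z|)` (`phi_lip`) and `|A| = O(μ |ζ - z|)` give `|θ| = O(L²)`.

*Upper bound for the distance* (`upper_bound`). The lift of the segment from `z` to `ζ` misses the
right height by `r = O(μ^(2m) N²)`. In polar coordinates the form is `-ρ^(2m+2) dϑ`, so a loop
over the endpoint of modulus `μ`, bounded by two radial segments of length `N` and two arcs of a
suitable angle, produces exactly the displacement `r` and has length `O(N)` (`conn_loop`).
-/

open MeasureTheory Set

noncomputable section

/-- Euclidean norm on ℝ². -/
def nrm (z : ℝ × ℝ) : ℝ := Real.sqrt (z.1 ^ 2 + z.2 ^ 2)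

/-- `|z|^(2m)` for a real parameter `m`. -/
def w2m (m : ℝ) (z : ℝ × ℝ) : ℝ := (z.1 ^ 2 + z.2 ^ 2) ^ m

/-- The vector field `X = ∂ₓ + |z|^(2m) y ∂_t` on ℝ³. -/
def Xvf (m : ℝ) (p : ℝ × ℝ × ℝ) : ℝ × ℝ × ℝ := (1, 0, w2m m (p.1, p.2.1) * p.2.1)

/-- The vector field `Y = ∂_y − |z|^(2m) x ∂_t` on ℝ³. -/
def Yvf (m : ℝ) (p : ℝ × ℝ × ℝ) : ℝ × ℝ × ℝ := (0, 1, -(w2m m (p.1, p.2.1) * p.1))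

/-- `γ` is an (absolutely continuous) horizontal curve on `[0, T]` with controls `α, β`. -/
def IsHorizontal (m : ℝ) (γ : ℝ → ℝ × ℝ × ℝ) (α β : ℝ → ℝ) (T : ℝ) : Prop :=
  ∀ t ∈ Icc (0 : ℝ) T,
    γ t = γ 0 + ∫ s in (0 : ℝ)..t, (α s • Xvf m (γ s) + β s • Yvf m (γ s))

/-- Length of a horizontal curve with controls `α, β` on `[0, T]`. -/
def ccLength (α β : ℝ → ℝ) (T : ℝ) : ℝ := ∫ s in (0 : ℝ)..T, Real.sqrt (α s ^ 2 + β s ^ 2)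

/-- The Carnot–Carathéodory distance associated with `X` and `Y`. -/
def ccDist (m : ℝ) (p q : ℝ × ℝ × ℝ) : ℝ :=
  sInf { L : ℝ | ∃ T, 0 ≤ T ∧ ∃ γ α β, IsHorizontal m γ α β T ∧
    γ 0 = p ∧ γ T = q ∧ L = ccLength α β T }
/-- `φ` is `m`-admissible with constant `C`:
`|D³φ(z)| ≤ C|z|^(2m−1)`, `|D²φ(z)| ≤ C|z|^(2m)`, `|Dφ(z)| ≤ C|z|^(2m+1)`. -/
def Admissible (m C : ℝ) (φ : ℝ × ℝ → ℝ) : Prop :=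
  ContDiff ℝ (⊤ : ℕ∞) φ ∧
  (∀ z, ‖iteratedFDeriv ℝ 1 φ z‖ ≤ C * nrm z ^ (2 * m + 1)) ∧
  (∀ z, ‖iteratedFDeriv ℝ 2 φ z‖ ≤ C * nrm z ^ (2 * m)) ∧
  (∀ z, ‖iteratedFDeriv ℝ 3 φ z‖ ≤ C * nrm z ^ (2 * m - 1))

/-- `φ_x`. -/
def phx (φ : ℝ × ℝ → ℝ) (z : ℝ × ℝ) : ℝ := fderiv ℝ φ z (1, 0)

/-- `φ_y`. -/
def phy (φ : ℝ × ℝ → ℝ) (z : ℝ × ℝ) : ℝ := fderiv ℝ φ z (0, 1)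

/-- `XF(z) = φ_x(z) − |z|^(2m) y` for `F(z,t) = φ(z) − t`. -/
def ZFx (m : ℝ) (φ : ℝ × ℝ → ℝ) (z : ℝ × ℝ) : ℝ := phx φ z - w2m m z * z.2

/-- `YF(z) = φ_y(z) + |z|^(2m) x` for `F(z,t) = φ(z) − t`. -/
def ZFy (m : ℝ) (φ : ℝ × ℝ → ℝ) (z : ℝ × ℝ) : ℝ := phy φ z + w2m m z * z.1

/-- `|ZF(z)|`. -/
def ZFnorm (m : ℝ) (φ : ℝ × ℝ → ℝ) (z : ℝ × ℝ) : ℝ :=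
  Real.sqrt (ZFx m φ z ^ 2 + ZFy m φ z ^ 2)

/-! ### The Euclidean norm of the plane -/

lemma nrm_eq (z : ℝ × ℝ) : nrm z = ‖(⟨z.1, z.2⟩ : ℂ)‖ := by
  rw [Complex.norm_def, Complex.normSq_mk, nrm]
  congr 1; ring

lemma nrm_nonneg (z : ℝ × ℝ) : 0 ≤ nrm z := Real.sqrt_nonneg _

lemma nrm_add_le (a b : ℝ × ℝ) : nrm (a + b) ≤ nrm a + nrm b := by
  simp only [nrm_eq]
  exact norm_add_le (⟨a.1, a.2⟩ : ℂ) ⟨b.1, b.2⟩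

lemma abs_nrm_sub_le (a b : ℝ × ℝ) : |nrm a - nrm b| ≤ nrm (a - b) := by
  simp only [nrm_eq]
  exact abs_norm_sub_norm_le (⟨a.1, a.2⟩ : ℂ) ⟨b.1, b.2⟩

lemma nrm_smul (c : ℝ) (z : ℝ × ℝ) : nrm (c • z) = |c| * nrm z := by
  unfold nrm
  rw [← Real.sqrt_sq_eq_abs, ← Real.sqrt_mul (sq_nonneg c)]
  congr 1; simp; ring

lemma abs_fst_le (z : ℝ × ℝ) : |z.1| ≤ nrm z := by
  unfold nrm; apply Real.abs_le_sqrt; nlinarith [sq_nonneg z.2]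

lemma abs_snd_le (z : ℝ × ℝ) : |z.2| ≤ nrm z := by
  unfold nrm; apply Real.abs_le_sqrt; nlinarith [sq_nonneg z.1]

lemma nrm_le_abs_add (z : ℝ × ℝ) : nrm z ≤ |z.1| + |z.2| := by
  unfold nrm
  apply Real.sqrt_le_iff.2 ⟨by positivity, ?_⟩
  nlinarith [sq_abs z.1, sq_abs z.2, mul_nonneg (abs_nonneg z.1) (abs_nonneg z.2)]

lemma eq_of_nrm_sub {z ζ : ℝ × ℝ} (h : nrm (ζ - z) = 0) : ζ = z := by
  have h1 := abs_fst_le (ζ - z)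
  have h2 := abs_snd_le (ζ - z)
  rw [h] at h1 h2
  have h1' := abs_nonpos_iff.1 h1
  have h2' := abs_nonpos_iff.1 h2
  simp only [Prod.fst_sub, Prod.snd_sub, sub_eq_zero] at h1' h2'
  exact Prod.ext h1' h2'

lemma w2m_eq (m : ℝ) (z : ℝ × ℝ) : w2m m z = nrm z ^ (2 * m) := by
  unfold w2m nrm
  rw [Real.rpow_mul (Real.sqrt_nonneg _), Real.rpow_two, Real.sq_sqrt (by positivity)]

lemma w2m_nonneg (m : ℝ) (z : ℝ × ℝ) : 0 ≤ w2m m z := by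
  unfold w2m; positivity

lemma abs_area_le {z ζ : ℝ × ℝ} {μ : ℝ} (hz : nrm z ≤ μ) :
    |z.1 * ζ.2 - z.2 * ζ.1| ≤ 2 * μ * nrm (ζ - z) := by
  have e : z.1 * ζ.2 - z.2 * ζ.1 = z.1 * (ζ - z).2 - z.2 * (ζ - z).1 := by simp; ring
  have h := nrm_nonneg (ζ - z)
  have h1 : |z.1 * (ζ - z).2| ≤ μ * nrm (ζ - z) := by
    rw [abs_mul]
    exact mul_le_mul ((abs_fst_le z).trans hz) (abs_snd_le _) (abs_nonneg _)
      ((nrm_nonneg z).trans hz)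
  have h2 : |z.2 * (ζ - z).1| ≤ μ * nrm (ζ - z) := by
    rw [abs_mul]
    exact mul_le_mul ((abs_snd_le z).trans hz) (abs_fst_le _) (abs_nonneg _)
      ((nrm_nonneg z).trans hz)
  rw [e]
  linarith [abs_sub (z.1 * (ζ - z).2) (z.2 * (ζ - z).1)]

/-- The Lipschitz bound for `a ↦ a ^ p` on `[0, M]`, multiplied by `M` so that no exponent `p - 1`
occurs. It comes from Bernoulli's inequality. -/
lemma rpow_lip {p a b M : ℝ} (hp : 1 ≤ p) (ha : 0 ≤ a) (hb : 0 ≤ b) (haM : a ≤ M) (hbM : b ≤ M) :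
    |a ^ p - b ^ p| * M ≤ p * M ^ p * |a - b| := by
  wlog hab : b ≤ a generalizing a b
  · rw [abs_sub_comm, abs_sub_comm a b]
    exact this hb ha hbM haM (le_of_not_ge hab)
  rcases ha.eq_or_lt with h0 | h0
  · have : b = a := le_antisymm hab (h0 ▸ hb)
    subst this; simp
  have hM : 0 < M := h0.trans_le haM
  rw [abs_of_nonneg (sub_nonneg.2 (Real.rpow_le_rpow hb hab (by linarith))),
    abs_of_nonneg (sub_nonneg.2 hab)]
  have hB := one_add_mul_self_le_rpow_one_add (s := b / a - 1)
    (by linarith [div_nonneg hb ha]) hp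
  rw [add_sub_cancel, Real.div_rpow hb ha, le_div_iff₀ (Real.rpow_pos_of_pos h0 p)] at hB
  have ea : a ^ p = a ^ (p - 1) * a := by
    rw [← Real.rpow_add_one h0.ne']; ring_nf
  have eM : M ^ p = M ^ (p - 1) * M := by
    rw [← Real.rpow_add_one hM.ne']; ring_nf
  have hmon : a ^ (p - 1) ≤ M ^ (p - 1) := Real.rpow_le_rpow ha haM (by linarith)
  have h1 : a ^ p - b ^ p ≤ p * a ^ (p - 1) * (a - b) := by
    have : (1 + p * (b / a - 1)) * a ^ p = a ^ p - p * a ^ (p - 1) * (a - b) := by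
      nth_rewrite 1 [ea]; rw [ea]; field_simp; ring
    linarith
  calc (a ^ p - b ^ p) * M ≤ p * a ^ (p - 1) * (a - b) * M := by gcongr
    _ ≤ p * M ^ (p - 1) * (a - b) * M := by
      have : 0 ≤ a - b := sub_nonneg.2 hab
      gcongr
    _ = _ := by rw [eM]; ring

/-! ### Joining points by horizontal curves -/

/-- The velocity `α X + β Y` along `γ`. -/
def vel (m : ℝ) (γ : ℝ → ℝ × ℝ × ℝ) (α β : ℝ → ℝ) (s : ℝ) : ℝ × ℝ × ℝ :=
  α s • Xvf m (γ s) + β s • Yvf m (γ s)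

/-- The Euclidean speed of the controls. -/
def spd (α β : ℝ → ℝ) (s : ℝ) : ℝ := Real.sqrt (α s ^ 2 + β s ^ 2)

/-- `p` and `q` are joined by a horizontal curve of length at most `L`. The velocity and the speed
are required to be interval integrable, so that the integrals are genuine and curves can be
concatenated. -/
def Conn (m : ℝ) (p q : ℝ × ℝ × ℝ) (L : ℝ) : Prop :=
  ∃ T, 0 ≤ T ∧ ∃ γ α β, IsHorizontal m γ α β T ∧ γ 0 = p ∧ γ T = q ∧ ccLength α β T ≤ L ∧
    IntervalIntegrable (vel m γ α β) volume 0 T ∧ IntervalIntegrable (spd α β) volume 0 T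

lemma ccLength_nonneg (α β : ℝ → ℝ) {T : ℝ} (hT : 0 ≤ T) : 0 ≤ ccLength α β T :=
  intervalIntegral.integral_nonneg hT fun _ _ => Real.sqrt_nonneg _

lemma Conn.ccDist_le {m : ℝ} {p q : ℝ × ℝ × ℝ} {L : ℝ} (h : Conn m p q L) : ccDist m p q ≤ L := by
  obtain ⟨T, hT, γ, α, β, hh, h0, h1, hL, -, -⟩ := h
  unfold ccDist
  refine le_trans (csInf_le ?_ ?_) hL
  swap
  · exact ⟨T, hT, γ, α, β, hh, h0, h1, rfl⟩
  refine ⟨0, ?_⟩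
  rintro _ ⟨T, hT, γ, α, β, -, -, -, rfl⟩
  exact ccLength_nonneg α β hT

lemma Conn.mono {m : ℝ} {p q : ℝ × ℝ × ℝ} {L L' : ℝ} (h : Conn m p q L) (hL : L ≤ L') :
    Conn m p q L' := by
  obtain ⟨T, hT, γ, α, β, hh, h0, h1, hl, h2⟩ := h
  exact ⟨T, hT, γ, α, β, hh, h0, h1, hl.trans hL, h2⟩

lemma integral_congr_on {E : Type*} [NormedAddCommGroup E] [NormedSpace ℝ E] {f g : ℝ → E}
    {a b : ℝ} (h : EqOn f g (uIoc a b)) : ∫ s in a..b, f s = ∫ s in a..b, g s :=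
  intervalIntegral.integral_congr_ae (Filter.Eventually.of_forall fun _ hs => h hs)

/-- Concatenation of horizontal curves. -/
lemma Conn.trans {m : ℝ} {p q r : ℝ × ℝ × ℝ} {L L' : ℝ} (h : Conn m p q L) (h' : Conn m q r L') :
    Conn m p r (L + L') := by
  obtain ⟨T, hT, γ, α, β, hh, h0, h1, hl, hv, hs⟩ := h
  obtain ⟨T', hT', γ', α', β', hh', h0', h1', hl', hv', hs'⟩ := h'
  set G : ℝ → ℝ × ℝ × ℝ := fun t => if t ≤ T then γ t else γ' (t - T) with hG
  set A : ℝ → ℝ := fun t => if t ≤ T then α t else α' (t - T) with hA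
  set B : ℝ → ℝ := fun t => if t ≤ T then β t else β' (t - T) with hB
  have eL : ∀ t ∈ Icc 0 T, EqOn (vel m G A B) (vel m γ α β) (uIoc 0 t) := by
    intro t ht s hs
    rw [uIoc_of_le ht.1] at hs
    have : s ≤ T := hs.2.trans ht.2
    simp [vel, hG, hA, hB, this]
  have eR : ∀ t ≥ T, EqOn (vel m G A B) (fun s => vel m γ' α' β' (s - T)) (uIoc T t) := by
    intro t ht s hs
    rw [uIoc_of_le ht] at hs
    simp [vel, hG, hA, hB, not_le.2 hs.1]
  have sL : EqOn (spd A B) (spd α β) (uIoc 0 T) := by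
    intro s hs
    rw [uIoc_of_le hT] at hs
    simp [spd, hA, hB, hs.2]
  have sR : EqOn (spd A B) (fun s => spd α' β' (s - T)) (uIoc T (T + T')) := by
    intro s hs
    rw [uIoc_of_le (by linarith)] at hs
    simp [spd, hA, hB, not_le.2 hs.1]
  have vi1 : IntervalIntegrable (vel m G A B) volume 0 T :=
    hv.congr (eL T ⟨hT, le_rfl⟩).symm
  have vi2 : IntervalIntegrable (vel m G A B) volume T (T + T') := by
    have := hv'.comp_sub_right T
    rw [zero_add, add_comm T'] at this
    exact this.congr (eR _ (by linarith)).symm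
  have si1 : IntervalIntegrable (spd A B) volume 0 T := hs.congr sL.symm
  have si2 : IntervalIntegrable (spd A B) volume T (T + T') := by
    have := hs'.comp_sub_right T
    rw [zero_add, add_comm T'] at this
    exact this.congr sR.symm
  have hG0 : G 0 = p := by simp [hG, hT, h0]
  have hI1 : ∀ t ∈ Icc 0 T, γ t = p + ∫ s in (0 : ℝ)..t, vel m G A B s := by
    intro t ht
    rw [integral_congr_on (eL t ht), ← h0]
    exact hh t ht
  refine ⟨T + T', by linarith, G, A, B, ?_, hG0, ?_, ?_, vi1.trans vi2, si1.trans si2⟩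
  · intro t ht
    rw [hG0]
    change G t = p + ∫ s in (0 : ℝ)..t, vel m G A B s
    by_cases htT : t ≤ T
    · rw [← hI1 t ⟨ht.1, htT⟩]; simp [hG, htT]
    · have htT' : T ≤ t := (not_le.1 htT).le
      rw [← intervalIntegral.integral_add_adjacent_intervals vi1
        (vi2.mono_set (by
          rw [uIcc_of_le htT', uIcc_of_le (by linarith)]; exact Icc_subset_Icc_right ht.2)),
        ← add_assoc, ← hI1 T ⟨hT, le_rfl⟩, h1, integral_congr_on (eR t htT'),
        intervalIntegral.integral_comp_sub_right (fun s => vel m γ' α' β' s) T, sub_self, ← h0']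
      have := hh' (t - T) ⟨by linarith, by linarith [ht.2]⟩
      simp only [hG, htT, if_false]
      exact this
  · by_cases h : T' = 0
    · subst h; simp [hG, h1, ← h1', h0']
    · have : ¬ (T + T' ≤ T) := by
        have := lt_of_le_of_ne hT' (Ne.symm h)
        linarith
      simp only [hG, this, if_false, add_sub_cancel_left, h1']
  · have : ccLength A B (T + T') = ccLength α β T + ccLength α' β' T' := by
      change ∫ s in (0 : ℝ)..(T + T'), spd A B s = _
      rw [← intervalIntegral.integral_add_adjacent_intervals si1 si2,
        integral_congr_on sL, integral_congr_on sR,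
        intervalIntegral.integral_comp_sub_right (fun s => spd α' β' s) T, sub_self,
        add_sub_cancel_left]
      rfl
    linarith

/-- A differentiable curve over `[0, 1]` whose derivative is `α X + β Y` with continuous controls of
speed at most `L` is horizontal of length at most `L`. -/
lemma Conn.of_hasDerivAt {m : ℝ} (hm : 0 ≤ m) {a b c α β : ℝ → ℝ} {L : ℝ}
    (hα : Continuous α) (hβ : Continuous β)
    (ha : ∀ t, HasDerivAt a (α t) t) (hb : ∀ t, HasDerivAt b (β t) t)
    (hc : ∀ t, HasDerivAt c (w2m m (a t, b t) * (α t * b t - β t * a t)) t)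
    (hL : ∀ t, Real.sqrt (α t ^ 2 + β t ^ 2) ≤ L) :
    Conn m (a 0, b 0, c 0) (a 1, b 1, c 1) L := by
  have ca : Continuous a := continuous_iff_continuousAt.2 fun t => (ha t).continuousAt
  have cb : Continuous b := continuous_iff_continuousAt.2 fun t => (hb t).continuousAt
  have cs : Continuous (spd α β) := by unfold spd; fun_prop
  have ev : vel m (fun t => (a t, b t, c t)) α β =
      fun t => (α t, β t, w2m m (a t, b t) * (α t * b t - β t * a t)) := by
    funext t
    simp only [vel, Xvf, Yvf, Prod.smul_mk, Prod.mk_add_mk, smul_eq_mul, mul_one, mul_zero,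
      add_zero, zero_add, Prod.mk.injEq, true_and]
    ring
  have cv : Continuous (vel m (fun t => (a t, b t, c t)) α β) := by
    have cw : Continuous fun t => w2m m (a t, b t) := by
      unfold w2m
      exact (by fun_prop : Continuous fun t => a t ^ 2 + b t ^ 2).rpow_const fun _ => Or.inr hm
    rw [ev]; fun_prop
  refine ⟨1, zero_le_one, fun t => (a t, b t, c t), α, β, ?_, rfl, rfl, ?_,
    cv.intervalIntegrable _ _, cs.intervalIntegrable _ _⟩
  · intro t _
    have := intervalIntegral.integral_eq_sub_of_hasDerivAt
      (f := fun t => (a t, b t, c t)) (a := 0) (b := t)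
      (fun x _ => by rw [ev]; exact (ha x).prodMk ((hb x).prodMk (hc x)))
      (cv.intervalIntegrable _ _)
    change (a t, b t, c t) = (a 0, b 0, c 0) +
      ∫ s in (0 : ℝ)..t, vel m (fun t => (a t, b t, c t)) α β s
    rw [this]
    abel
  · have := intervalIntegral.integral_mono_on (μ := volume) (zero_le_one (α := ℝ))
      (cs.intervalIntegrable 0 1) (continuous_const.intervalIntegrable 0 1 : IntervalIntegrable
        (fun _ : ℝ => L) volume 0 1) (fun t _ => hL t)
    simp only [intervalIntegral.integral_const, sub_zero, one_smul] at this
    exact this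

/-- The lift of the segment from `z` to `ζ`. -/
lemma conn_line {m : ℝ} (hm : 0 ≤ m) (z ζ : ℝ × ℝ) (t : ℝ) :
    Conn m (z.1, z.2, t) (ζ.1, ζ.2, t - (z.1 * ζ.2 - z.2 * ζ.1) *
      ∫ s in (0 : ℝ)..1, w2m m (z + s • (ζ - z))) (nrm (ζ - z)) := by
  have cw : Continuous fun s : ℝ => w2m m (z + s • (ζ - z)) := by
    unfold w2m
    exact (by fun_prop : Continuous fun s : ℝ => (z + s • (ζ - z)).1 ^ 2 +
      (z + s • (ζ - z)).2 ^ 2).rpow_const fun _ => Or.inr hm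
  have key := Conn.of_hasDerivAt hm (L := nrm (ζ - z))
    (a := fun s => z.1 + s * (ζ.1 - z.1)) (b := fun s => z.2 + s * (ζ.2 - z.2))
    (c := fun s => t - (z.1 * ζ.2 - z.2 * ζ.1) *
      ∫ u in (0 : ℝ)..s, w2m m (z + u • (ζ - z)))
    (α := fun _ => ζ.1 - z.1) (β := fun _ => ζ.2 - z.2) continuous_const continuous_const
    (fun s => by simpa using ((hasDerivAt_id s).mul_const (ζ.1 - z.1)).const_add z.1)
    (fun s => by simpa using ((hasDerivAt_id s).mul_const (ζ.2 - z.2)).const_add z.2)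
    (fun s => by
      have h := ((cw.integral_hasStrictDerivAt 0 s).hasDerivAt.const_mul
        (z.1 * ζ.2 - z.2 * ζ.1)).const_sub t
      refine h.congr_deriv ?_
      simp only [w2m, Prod.fst_add, Prod.snd_add, Prod.smul_fst, Prod.smul_snd, Prod.fst_sub,
        Prod.snd_sub, smul_eq_mul]
      ring)
    (fun s => le_of_eq rfl)
  simpa using key

/-- Rotation of the plane by the angle `ψ`. -/
def rot (ψ : ℝ) (e : ℝ × ℝ) : ℝ × ℝ :=
  (e.1 * Real.cos ψ - e.2 * Real.sin ψ, e.1 * Real.sin ψ + e.2 * Real.cos ψ)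

lemma rot_sq (ψ : ℝ) (e : ℝ × ℝ) : (rot ψ e).1 ^ 2 + (rot ψ e).2 ^ 2 = e.1 ^ 2 + e.2 ^ 2 := by
  have := Real.sin_sq_add_cos_sq ψ
  simp only [rot]
  linear_combination (e.1 ^ 2 + e.2 ^ 2) * this

lemma nrm_rot (ψ : ℝ) (e : ℝ × ℝ) : nrm (rot ψ e) = nrm e := by
  unfold nrm; rw [rot_sq]

lemma rot_neg (ψ : ℝ) (e : ℝ × ℝ) : rot (-ψ) (rot ψ e) = e := by
  have := Real.sin_sq_add_cos_sq ψ
  simp only [rot, Real.cos_neg, Real.sin_neg]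
  ext
  · simp only; linear_combination e.1 * this
  · simp only; linear_combination e.2 * this

/-- The lift of the circular arc of angle `ψ` about the origin: in polar coordinates the form
`|z|^(2m) (y dx - x dy)` is `- r^(2m+2) dθ`. -/
lemma conn_arc {m : ℝ} (hm : 0 ≤ m) (e : ℝ × ℝ) (ψ t : ℝ) :
    Conn m (e.1, e.2, t) ((rot ψ e).1, (rot ψ e).2, t - w2m m e * nrm e ^ 2 * ψ)
      (nrm e * |ψ|) := by
  have hc : ∀ s : ℝ, HasDerivAt (fun s => Real.cos (s * ψ)) (-Real.sin (s * ψ) * ψ) s := fun s => by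
    simpa using ((hasDerivAt_id s).mul_const ψ).cos
  have hs : ∀ s : ℝ, HasDerivAt (fun s => Real.sin (s * ψ)) (Real.cos (s * ψ) * ψ) s := fun s => by
    simpa using ((hasDerivAt_id s).mul_const ψ).sin
  have hn : nrm e ^ 2 = e.1 ^ 2 + e.2 ^ 2 := by unfold nrm; rw [Real.sq_sqrt (by positivity)]
  have key := Conn.of_hasDerivAt hm (L := nrm e * |ψ|)
    (a := fun s => e.1 * Real.cos (s * ψ) - e.2 * Real.sin (s * ψ))
    (b := fun s => e.1 * Real.sin (s * ψ) + e.2 * Real.cos (s * ψ))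
    (c := fun s => t - w2m m e * nrm e ^ 2 * ψ * s)
    (α := fun s => e.1 * (-Real.sin (s * ψ) * ψ) - e.2 * (Real.cos (s * ψ) * ψ))
    (β := fun s => e.1 * (Real.cos (s * ψ) * ψ) + e.2 * (-Real.sin (s * ψ) * ψ))
    (by fun_prop) (by fun_prop)
    (fun s => ((hc s).const_mul _).sub ((hs s).const_mul _))
    (fun s => ((hs s).const_mul _).add ((hc s).const_mul _))
    (fun s => by
      have h := ((hasDerivAt_id s).const_mul (w2m m e * nrm e ^ 2 * ψ)).const_sub t
      refine h.congr_deriv ?_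
      have hw : w2m m (e.1 * Real.cos (s * ψ) - e.2 * Real.sin (s * ψ),
          e.1 * Real.sin (s * ψ) + e.2 * Real.cos (s * ψ)) = w2m m e := by
        have := rot_sq (s * ψ) e
        simp only [rot] at this
        simp only [w2m, this]
      rw [hw, hn]
      have := Real.sin_sq_add_cos_sq (s * ψ)
      linear_combination (w2m m e * (e.1 ^ 2 + e.2 ^ 2) * ψ) * this)
    (fun s => by
      apply le_of_eq
      unfold nrm
      rw [← Real.sqrt_sq_eq_abs, ← Real.sqrt_mul (by positivity)]
      congr 1
      have := Real.sin_sq_add_cos_sq (s * ψ)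
      linear_combination (e.1 ^ 2 + e.2 ^ 2) * ψ ^ 2 * this)
  simpa [rot] using key

lemma conn_radial {m : ℝ} (hm : 0 ≤ m) (e : ℝ × ℝ) (l l' t : ℝ) :
    Conn m ((l • e).1, (l • e).2, t) ((l' • e).1, (l' • e).2, t) (|l' - l| * nrm e) := by
  have h := conn_line hm (l • e) (l' • e) t
  have e0 : (l • e).1 * (l' • e).2 - (l • e).2 * (l' • e).1 = 0 := by
    simp only [Prod.smul_fst, Prod.smul_snd, smul_eq_mul]; ring
  rw [e0, zero_mul, sub_zero, ← sub_smul, nrm_smul] at h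
  exact h

/-- A loop realising a vertical displacement `r` over `e`: move radially from radius `|e|` to
`|e| + N`, turn by an angle `ψ`, move back to radius `|e|`, turn by `-ψ`. With `R = |e| + N` the height changes
by `-(R^(2m+2) - |e|^(2m+2)) ψ`, so `ψ` is explicit, and `R^(2m+2) - |e|^(2m+2) ≥ R^(2m+1) N` bounds
the length of the arcs. -/
lemma conn_loop {m : ℝ} (hm : 0 ≤ m) (e : ℝ × ℝ) (t r : ℝ) {N K : ℝ} (he : 0 < nrm e) (hN : 0 < N)
    (hr : |r| ≤ K * nrm e ^ (2 * m) * N ^ 2) :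
    Conn m (e.1, e.2, t) (e.1, e.2, t + r) ((2 + 2 * K) * N) := by
  set μ := nrm e with hμ
  set R := μ + N with hR
  have hRpos : 0 < R := by positivity
  have hmR : μ ^ (2 * m) ≤ R ^ (2 * m) := Real.rpow_le_rpow he.le (by linarith) (by linarith)
  have hRm : 0 < R ^ (2 * m) := Real.rpow_pos_of_pos hRpos _
  have hmm : 0 < μ ^ (2 * m) := Real.rpow_pos_of_pos he _
  set D := R ^ (2 * m) * R ^ 2 - μ ^ (2 * m) * μ ^ 2 with hD
  have hDge : R ^ (2 * m) * R * N ≤ D := by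
    have : μ ^ (2 * m) * μ ^ 2 ≤ R ^ (2 * m) * (R * μ) := by
      apply mul_le_mul hmR _ (by positivity) hRm.le
      nlinarith
    nlinarith
  have hDpos : 0 < D := lt_of_lt_of_le (by positivity) hDge
  set ψ := -(r / D) with hψ
  set l := R / μ with hl
  have hlμ : nrm (l • e) = R := by
    rw [nrm_smul, abs_of_pos (by positivity), ← hμ, hl]; field_simp
  have c1 := conn_radial hm e 1 l t
  have c2 := conn_arc hm (l • e) ψ t
  have hrot : rot ψ (l • e) = l • rot ψ e := by
    simp only [rot, Prod.smul_fst, Prod.smul_snd, smul_eq_mul, Prod.smul_mk]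
    ext <;> simp only <;> ring
  rw [hrot] at c2
  have c3 := conn_radial hm (rot ψ e) l 1 (t - w2m m (l • e) * nrm (l • e) ^ 2 * ψ)
  have c4 := conn_arc hm (rot ψ e) (-ψ) (t - w2m m (l • e) * nrm (l • e) ^ 2 * ψ)
  rw [rot_neg] at c4
  rw [one_smul] at c1 c3
  have c := ((c1.trans c2).trans c3).trans c4
  simp only [w2m_eq, nrm_rot, hlμ, ← hμ] at c
  have et : t - R ^ (2 * m) * R ^ 2 * ψ - μ ^ (2 * m) * μ ^ 2 * -ψ = t + r := by
    have : D * ψ = -r := by rw [hψ]; field_simp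
    rw [hD] at this
    linear_combination -this
  rw [et] at c
  refine c.mono ?_
  have hl1 : (l - 1) * μ = N := by rw [hl]; field_simp; rw [hR]; ring
  have hl0 : 0 ≤ l - 1 := by
    by_contra h
    have := mul_neg_of_neg_of_pos (not_le.1 h) he
    linarith
  have a1 : |l - 1| * μ = N := by rw [abs_of_nonneg hl0, hl1]
  have a2 : |1 - l| * μ = N := by rw [abs_sub_comm, a1]
  have hRψ : R * |ψ| ≤ K * N := by
    rw [hψ, abs_neg, abs_div, abs_of_pos hDpos, mul_div_assoc', div_le_iff₀ hDpos]
    have hK : 0 ≤ K := by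
      by_contra h
      have h2 : K * μ ^ (2 * m) * N ^ 2 < 0 := by
        have h3 : 0 < μ ^ (2 * m) * N ^ 2 := by positivity
        nlinarith
      linarith [abs_nonneg r]
    calc R * |r| ≤ R * (K * μ ^ (2 * m) * N ^ 2) := by gcongr
      _ ≤ R * (K * R ^ (2 * m) * N ^ 2) := by gcongr
      _ = K * N * (R ^ (2 * m) * R * N) := by ring
      _ ≤ K * N * D := by gcongr
  have hμψ : μ * |ψ| ≤ R * |ψ| := by gcongr; linarith
  rw [a1, a2, abs_neg ψ]
  linarith

/-! ### Lower bound for the length of a horizontal curve -/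

/-- Within distance `O(L)` of `z`, where `L ≤ μ` and `|z|` is itself within `2L` of `μ`, the
coefficients of `|w|^(2m) (w₂ dx - w₁ dy)` differ from those of `μ^(2m) (z₂ dx - z₁ dy)` by
`O(μ^(2m) L)`. -/
lemma coeff_bound {m μ L : ℝ} {z w : ℝ × ℝ} (hm : 1 ≤ m) (hμ : 0 < μ) (hL : 0 ≤ L) (hLμ : L ≤ μ)
    (hz : nrm z ≤ μ) (hz' : μ - nrm z ≤ 2 * L) (h1 : |w.1 - z.1| ≤ L) (h2 : |w.2 - z.2| ≤ L) :
    |w2m m w * w.1 - μ ^ (2 * m) * z.1| ≤ 3 ^ (2 * m) * (1 + 8 * m) * (μ ^ (2 * m) * L) ∧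
    |w2m m w * w.2 - μ ^ (2 * m) * z.2| ≤ 3 ^ (2 * m) * (1 + 8 * m) * (μ ^ (2 * m) * L) := by
  have hd : nrm (w - z) ≤ 2 * L := by
    refine (nrm_le_abs_add _).trans ?_
    simp only [Prod.fst_sub, Prod.snd_sub]
    linarith
  have hwz := abs_le.1 ((abs_nrm_sub_le w z).trans hd)
  have hw3 : nrm w ≤ 3 * μ := by linarith [hwz.2]
  have hwμ : |nrm w - μ| ≤ 4 * L := abs_le.2 ⟨by linarith [hwz.1], by linarith [hwz.2]⟩
  have h3 : (3 * μ) ^ (2 * m) = 3 ^ (2 * m) * μ ^ (2 * m) := Real.mul_rpow (by norm_num) hμ.le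
  have hP : nrm w ^ (2 * m) ≤ 3 ^ (2 * m) * μ ^ (2 * m) := by
    rw [← h3]; exact Real.rpow_le_rpow (nrm_nonneg w) hw3 (by linarith)
  have hlip := rpow_lip (p := 2 * m) (by linarith) (nrm_nonneg w) hμ.le hw3
    (by linarith : μ ≤ 3 * μ)
  rw [h3] at hlip
  set P := (3 : ℝ) ^ (2 * m)
  set Q := μ ^ (2 * m)
  have hPQ : 0 ≤ P * Q := by positivity
  have hdiff : |nrm w ^ (2 * m) - Q| * μ ≤ 8 * m * (P * Q) * L := by
    have : |nrm w ^ (2 * m) - Q| * μ ≤ |nrm w ^ (2 * m) - Q| * (3 * μ) := by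
      gcongr; linarith
    have h4 : 2 * m * (P * Q) * |nrm w - μ| ≤ 2 * m * (P * Q) * (4 * L) := by gcongr
    linarith
  have gen : ∀ a b : ℝ, |a - b| ≤ L → |b| ≤ μ →
      |w2m m w * a - Q * b| ≤ P * (1 + 8 * m) * (Q * L) := by
    intro a b hab hb
    have e : w2m m w * a - Q * b = nrm w ^ (2 * m) * (a - b) + (nrm w ^ (2 * m) - Q) * b := by
      rw [w2m_eq]; ring
    have hw0 : 0 ≤ nrm w ^ (2 * m) := Real.rpow_nonneg (nrm_nonneg w) _
    rw [e]
    refine (abs_add_le _ _).trans ?_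
    rw [abs_mul, abs_mul, abs_of_nonneg hw0]
    have i1 : nrm w ^ (2 * m) * |a - b| ≤ P * Q * L := by gcongr
    have i2 : |nrm w ^ (2 * m) - Q| * |b| ≤ |nrm w ^ (2 * m) - Q| * μ := by gcongr
    linarith
  exact ⟨gen _ _ h1 ((abs_fst_le z).trans hz), gen _ _ h2 ((abs_snd_le z).trans hz)⟩

/-- The constant in the bound of the vertical term by the square of the length. -/
def lowC (m Ca : ℝ) : ℝ := 2 * Ca + 4 + 2 * (3 ^ (2 * m) * (1 + 8 * m))

/-- A horizontal curve of length `L` controls both terms of the graph distance. The vertical term is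
`∫ (α (|w|^(2m) w₂ - μ^(2m) z₂) - β (|w|^(2m) w₁ - μ^(2m) z₁))` divided by `μ^(2m)`, where `w` is the
planar projection, and for `L ≤ μ` the parentheses are `O(μ^(2m) L)`. For `L > μ` the Lipschitz
hypothesis on the heights is enough. -/
lemma lower_bound {m Ca : ℝ} (hm : 1 ≤ m) (hCa : 0 < Ca) {z ζ : ℝ × ℝ} {t τ : ℝ}
    (hτ : |τ - t| ≤ Ca * max (nrm z) (nrm ζ) ^ (2 * m + 1) * nrm (ζ - z)) {γ : ℝ → ℝ × ℝ × ℝ}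
    {α β : ℝ → ℝ} {T : ℝ} (hT : 0 ≤ T) (hh : IsHorizontal m γ α β T) (h0 : γ 0 = (z.1, z.2, t))
    (h1 : γ T = (ζ.1, ζ.2, τ)) :
    nrm (ζ - z) ≤ 2 * ccLength α β T ∧
    |(τ - t) / max (nrm z) (nrm ζ) ^ (2 * m) + (z.1 * ζ.2 - z.2 * ζ.1)| ≤
      lowC m Ca * ccLength α β T ^ 2 := by
  set L := ccLength α β T with hLdef
  have hL : 0 ≤ L := ccLength_nonneg α β hT
  have hP : 0 ≤ (3 : ℝ) ^ (2 * m) * (1 + 8 * m) := by positivity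
  have hK : 0 ≤ lowC m Ca := by unfold lowC; positivity
  have trivial_case : ζ = z → τ = t → nrm (ζ - z) ≤ 2 * L ∧
    |(τ - t) / max (nrm z) (nrm ζ) ^ (2 * m) + (z.1 * ζ.2 - z.2 * ζ.1)| ≤ lowC m Ca * L ^ 2 := by
    rintro rfl rfl
    have e : ζ.1 * ζ.2 - ζ.2 * ζ.1 = 0 := by ring
    simp only [sub_self, zero_div, e, add_zero, abs_zero]
    refine ⟨?_, by positivity⟩
    simp [nrm]; positivity
  by_cases hint : IntervalIntegrable (vel m γ α β) volume 0 T
  swap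
  · -- a non-integrable velocity has integral `0`, so the endpoints coincide
    have := hh T ⟨hT, le_rfl⟩
    change γ T = γ 0 + ∫ s in (0 : ℝ)..T, vel m γ α β s at this
    rw [intervalIntegral.integral_undef hint, add_zero, h0, h1] at this
    simp only [Prod.mk.injEq] at this
    exact trivial_case (Prod.ext this.1 this.2.1) this.2.2
  set w : ℝ → ℝ × ℝ := fun s => ((γ s).1, (γ s).2.1) with hw
  set h : ℝ → ℝ := fun s => α s * (w2m m (w s) * (w s).2) - β s * (w2m m (w s) * (w s).1) with hhdef
  have ev : vel m γ α β = fun s => (α s, β s, h s) := by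
    funext s
    simp only [vel, Xvf, Yvf, hhdef, hw, Prod.smul_mk, Prod.mk_add_mk, smul_eq_mul, mul_one,
      mul_zero, add_zero, zero_add, Prod.mk.injEq, true_and]
    ring
  have hint' : IntegrableOn (fun s => (α s, β s, h s)) (Ioc 0 T) volume := by
    rw [← ev]; exact (intervalIntegrable_iff_integrableOn_Ioc_of_le hT).1 hint
  have iα : IntervalIntegrable α volume 0 T :=
    (intervalIntegrable_iff_integrableOn_Ioc_of_le hT).2 hint'.fst
  have iβ : IntervalIntegrable β volume 0 T :=
    (intervalIntegrable_iff_integrableOn_Ioc_of_le hT).2 hint'.snd.fst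
  have ih : IntervalIntegrable h volume 0 T :=
    (intervalIntegrable_iff_integrableOn_Ioc_of_le hT).2 hint'.snd.snd
  have lα : ∀ s, |α s| ≤ spd α β s := fun s => abs_fst_le (α s, β s)
  have lβ : ∀ s, |β s| ≤ spd α β s := fun s => abs_snd_le (α s, β s)
  have is : IntervalIntegrable (spd α β) volume 0 T := by
    refine (iα.abs.add iβ.abs).mono_fun ?_ (Filter.Eventually.of_forall fun s => ?_)
    · have m1 : AEStronglyMeasurable α (volume.restrict (uIoc 0 T)) := by
        rw [uIoc_of_le hT]; exact iα.1.aestronglyMeasurable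
      have m2 : AEStronglyMeasurable β (volume.restrict (uIoc 0 T)) := by
        rw [uIoc_of_le hT]; exact iβ.1.aestronglyMeasurable
      exact Real.continuous_sqrt.comp_aestronglyMeasurable ((m1.pow 2).add (m2.pow 2))
    · have := nrm_le_abs_add (α s, β s)
      change ‖spd α β s‖ ≤ ‖|α s| + |β s|‖
      have hsp : 0 ≤ spd α β s := Real.sqrt_nonneg _
      rw [Real.norm_of_nonneg hsp]
      exact this.trans (le_abs_self _)
  have sub : ∀ u ∈ Icc 0 T, uIcc 0 u ⊆ uIcc 0 T := fun u hu => by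
    rw [uIcc_of_le hu.1, uIcc_of_le hT]; exact Icc_subset_Icc_right hu.2
  have comp : ∀ u ∈ Icc 0 T, γ u =
      (z.1 + ∫ s in (0 : ℝ)..u, α s, z.2 + ∫ s in (0 : ℝ)..u, β s,
        t + ∫ s in (0 : ℝ)..u, h s) := by
    intro u hu
    have := hh u hu
    change γ u = γ 0 + ∫ s in (0 : ℝ)..u, vel m γ α β s at this
    rw [this, h0, ev]
    have jα := (iα.mono_set (sub u hu)).1
    have jβ := (iβ.mono_set (sub u hu)).1
    have jh := (ih.mono_set (sub u hu)).1
    simp only [intervalIntegral.integral_of_le hu.1]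
    have e1 := integral_pair (f := α) (g := fun s => (β s, h s)) jα (jβ.prodMk jh)
    have e2 := integral_pair (f := β) (g := h) jβ jh
    rw [e1, e2]
    rfl
  have small : ∀ f : ℝ → ℝ, (∀ s, |f s| ≤ spd α β s) → ∀ u ∈ Icc 0 T,
      |∫ s in (0 : ℝ)..u, f s| ≤ L := by
    intro f hf u hu
    have b1 := intervalIntegral.norm_integral_le_of_norm_le (f := f) (μ := volume) hu.1
      (Filter.Eventually.of_forall fun s _ => hf s) (is.mono_set (sub u hu))
    refine b1.trans ?_
    exact intervalIntegral.integral_mono_interval le_rfl hu.1 hu.2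
      (Filter.Eventually.of_forall fun s => Real.sqrt_nonneg _) is
  have hTT : T ∈ Icc 0 T := ⟨hT, le_rfl⟩
  have hend := comp T hTT
  rw [h1] at hend
  simp only [Prod.mk.injEq] at hend
  obtain ⟨hx, hy, ht⟩ := hend
  have hξ : ζ.1 - z.1 = ∫ s in (0 : ℝ)..T, α s := by linarith
  have hη : ζ.2 - z.2 = ∫ s in (0 : ℝ)..T, β s := by linarith
  have hn : nrm (ζ - z) ≤ 2 * L := by
    refine (nrm_le_abs_add _).trans ?_
    simp only [Prod.fst_sub, Prod.snd_sub, hξ, hη]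
    linarith [small α lα T hTT, small β lβ T hTT]
  refine ⟨hn, ?_⟩
  set μ := max (nrm z) (nrm ζ) with hμdef
  have hzμ : nrm z ≤ μ := le_max_left _ _
  have hμ0 : 0 ≤ μ := (nrm_nonneg z).trans hzμ
  rcases hμ0.eq_or_lt with hμ | hμ
  · have hn0 : nrm (ζ - z) = 0 := by
      have e1 : nrm z = 0 := le_antisymm (hμ ▸ hzμ) (nrm_nonneg z)
      have e2 : nrm ζ = 0 := le_antisymm (hμ ▸ le_max_right _ _) (nrm_nonneg ζ)
      have := nrm_add_le ζ ((-1 : ℝ) • z)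
      rw [nrm_smul, e1, e2] at this
      have e3 : ζ + (-1 : ℝ) • z = ζ - z := by simp [sub_eq_add_neg]
      rw [e3] at this
      exact le_antisymm (by simpa using this) (nrm_nonneg _)
    rw [hn0, mul_zero] at hτ
    exact (trivial_case (eq_of_nrm_sub hn0) (by linarith [abs_nonpos_iff.1 hτ])).2
  have hQ : 0 < μ ^ (2 * m) := Real.rpow_pos_of_pos hμ _
  rcases le_or_gt L μ with hLμ | hLμ
  · -- the vertical term is the integral of the oscillation of the coefficients along the curve
    have hz' : μ - nrm z ≤ 2 * L := by
      have := (abs_le.1 (abs_nrm_sub_le ζ z)).2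
      rcases max_choice (nrm z) (nrm ζ) with e | e <;> rw [hμdef, e] <;> linarith
    have hpt : ∀ s ∈ Ioc 0 T,
        |h s - μ ^ (2 * m) * (z.2 * α s - z.1 * β s)| ≤
          2 * (3 ^ (2 * m) * (1 + 8 * m) * (μ ^ (2 * m) * L)) * spd α β s := by
      intro s hs
      have hs' : s ∈ Icc 0 T := ⟨hs.1.le, hs.2⟩
      have hg := comp s hs'
      have g1 : |(w s).1 - z.1| ≤ L := by
        simpa [hw, hg] using small α lα s hs'
      have g2 : |(w s).2 - z.2| ≤ L := by
        simpa [hw, hg] using small β lβ s hs'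
      obtain ⟨c1, c2⟩ := coeff_bound hm hμ hL hLμ hzμ hz' g1 g2
      set B := (3 : ℝ) ^ (2 * m) * (1 + 8 * m) * (μ ^ (2 * m) * L)
      have e : h s - μ ^ (2 * m) * (z.2 * α s - z.1 * β s) =
          α s * (w2m m (w s) * (w s).2 - μ ^ (2 * m) * z.2) -
            β s * (w2m m (w s) * (w s).1 - μ ^ (2 * m) * z.1) := by
        simp only [hhdef]; ring
      rw [e]
      have hsp : 0 ≤ spd α β s := Real.sqrt_nonneg _
      have i1 := mul_le_mul (lα s) c2 (abs_nonneg _) hsp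
      have i2 := mul_le_mul (lβ s) c1 (abs_nonneg _) hsp
      rw [← abs_mul] at i1 i2
      linarith [abs_sub (α s * (w2m m (w s) * (w s).2 - μ ^ (2 * m) * z.2))
        (β s * (w2m m (w s) * (w s).1 - μ ^ (2 * m) * z.1))]
    have hI := intervalIntegral.norm_integral_le_of_norm_le (μ := volume)
      (f := fun s => h s - μ ^ (2 * m) * (z.2 * α s - z.1 * β s))
      (g := fun s => 2 * (3 ^ (2 * m) * (1 + 8 * m) * (μ ^ (2 * m) * L)) * spd α β s) hT
      (Filter.Eventually.of_forall hpt) (is.const_mul _)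
    rw [intervalIntegral.integral_const_mul, Real.norm_eq_abs,
      intervalIntegral.integral_sub ih (((iα.const_mul _).sub (iβ.const_mul _)).const_mul _),
      intervalIntegral.integral_const_mul,
      intervalIntegral.integral_sub (iα.const_mul _) (iβ.const_mul _),
      intervalIntegral.integral_const_mul, intervalIntegral.integral_const_mul, ← hξ, ← hη] at hI
    have eI : (∫ s in (0 : ℝ)..T, h s) - μ ^ (2 * m) * (z.2 * (ζ.1 - z.1) - z.1 * (ζ.2 - z.2)) =
        μ ^ (2 * m) * ((τ - t) / μ ^ (2 * m) + (z.1 * ζ.2 - z.2 * ζ.1)) := by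
      have : (∫ s in (0 : ℝ)..T, h s) = τ - t := by linarith
      rw [this]; field_simp; ring
    rw [eI, abs_mul, abs_of_pos hQ] at hI
    have hsL : ∫ s in (0 : ℝ)..T, spd α β s = L := rfl
    rw [hsL] at hI
    have : |(τ - t) / μ ^ (2 * m) + (z.1 * ζ.2 - z.2 * ζ.1)| ≤
        2 * (3 ^ (2 * m) * (1 + 8 * m)) * L ^ 2 := by
      refine le_of_mul_le_mul_left (hI.trans (le_of_eq ?_)) hQ
      ring
    refine this.trans ?_
    unfold lowC
    gcongr
    linarith
  · have a1 : |(τ - t) / μ ^ (2 * m)| ≤ Ca * μ * nrm (ζ - z) := by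
      rw [abs_div, abs_of_pos hQ, div_le_iff₀ hQ]
      rw [Real.rpow_add_one hμ.ne'] at hτ
      linarith
    have a2 := abs_area_le (ζ := ζ) hzμ
    have hn0 := nrm_nonneg (ζ - z)
    have a3 : μ * nrm (ζ - z) ≤ L * (2 * L) := mul_le_mul hLμ.le hn hn0 hL
    have a4 : (Ca + 2) * (μ * nrm (ζ - z)) ≤ (Ca + 2) * (L * (2 * L)) := by gcongr
    refine (abs_add_le _ _).trans ?_
    have a5 : 0 ≤ 2 * (3 ^ (2 * m) * (1 + 8 * m)) * L ^ 2 := by positivity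
    unfold lowC
    nlinarith

/-- Increments of an admissible function, by the mean value inequality on a disc. -/
lemma phi_lip {m Ca : ℝ} (hm : 1 ≤ m) (hCa : 0 < Ca) {φ : ℝ × ℝ → ℝ} (hφ : Admissible m Ca φ)
    (z ζ : ℝ × ℝ) :
    |φ ζ - φ z| ≤ Ca * max (nrm z) (nrm ζ) ^ (2 * m + 1) * nrm (ζ - z) := by
  obtain ⟨hs, h1, -, -⟩ := hφ
  set μ := max (nrm z) (nrm ζ)
  have hc : Convex ℝ {w : ℝ × ℝ | nrm w ≤ μ} := by
    intro a ha b hb u v hu hv huv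
    have := nrm_add_le (u • a) (v • b)
    rw [nrm_smul, nrm_smul, abs_of_nonneg hu, abs_of_nonneg hv] at this
    have i1 := mul_le_mul_of_nonneg_left ha hu
    have i2 := mul_le_mul_of_nonneg_left hb hv
    have e : u * μ + v * μ = μ := by rw [← add_mul, huv, one_mul]
    change nrm _ ≤ μ
    linarith
  have key := hc.norm_image_sub_le_of_norm_fderiv_le (𝕜 := ℝ) (f := φ)
    (C := Ca * μ ^ (2 * m + 1))
    (fun x _ => (hs.differentiable (by simp)).differentiableAt)
    (fun x hx => by
      rw [← norm_iteratedFDeriv_one]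
      refine (h1 x).trans ?_
      have := Real.rpow_le_rpow (nrm_nonneg x) hx (by linarith : 0 ≤ 2 * m + 1)
      gcongr)
    (le_max_left _ _ : nrm z ≤ μ) (le_max_right _ _ : nrm ζ ≤ μ)
  refine key.trans ?_
  have : ‖ζ - z‖ ≤ nrm (ζ - z) := by
    rw [Prod.norm_def]
    exact max_le (abs_fst_le _) (abs_snd_le _)
  have hμ : 0 ≤ μ := (nrm_nonneg z).trans (le_max_left _ _)
  gcongr

/-! ### Construction of a short horizontal curve -/

/-- The segment from `z` to `ζ` is lifted, and a loop over the endpoint farther from the origin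
corrects the height. The loop has to make up `(τ - t) + A I`, where `A = xη - yξ` and `I` is the mean
of `|·|^(2m)` over the segment; this is `O(μ^(2m) N²)` because `I` is close to `μ^(2m)`. -/
lemma upper_bound {m : ℝ} (hm : 1 ≤ m) {z ζ : ℝ × ℝ} {t τ N : ℝ} (hN : 0 < N)
    (h1 : nrm (ζ - z) ≤ N) (hμ : 0 < max (nrm z) (nrm ζ))
    (h2 : |(τ - t) / max (nrm z) (nrm ζ) ^ (2 * m) + (z.1 * ζ.2 - z.2 * ζ.1)| ≤ N ^ 2) :
    Conn m (z.1, z.2, t) (ζ.1, ζ.2, τ) ((5 + 8 * m) * N) := by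
  have hm0 : 0 ≤ m := by linarith
  set μ := max (nrm z) (nrm ζ) with hμdef
  have hQ : 0 < μ ^ (2 * m) := Real.rpow_pos_of_pos hμ _
  set A := z.1 * ζ.2 - z.2 * ζ.1 with hA
  have cw : Continuous fun s : ℝ => w2m m (z + s • (ζ - z)) := by
    unfold w2m
    exact (by fun_prop : Continuous fun s : ℝ => (z + s • (ζ - z)).1 ^ 2 +
      (z + s • (ζ - z)).2 ^ 2).rpow_const fun _ => Or.inr hm0
  set I := ∫ s in (0 : ℝ)..1, w2m m (z + s • (ζ - z)) with hI
  have hn0 := nrm_nonneg (ζ - z)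
  have hIμ : |I - μ ^ (2 * m)| * μ ≤ 2 * m * μ ^ (2 * m) * nrm (ζ - z) := by
    have hpt : ∀ s ∈ uIoc (0 : ℝ) 1, ‖w2m m (z + s • (ζ - z)) - μ ^ (2 * m)‖ ≤
        2 * m * μ ^ (2 * m) * nrm (ζ - z) / μ := by
      intro s hs
      rw [uIoc_of_le zero_le_one] at hs
      set p := z + s • (ζ - z) with hp
      have hs1 : 0 ≤ 1 - s := by linarith [hs.2]
      have e1 : p = (1 - s) • z + s • ζ := by
        rw [hp]; module
      have e2 : ζ - p = (1 - s) • (ζ - z) := by rw [hp]; module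
      have e3 : p - z = s • (ζ - z) := by rw [hp]; module
      have hpμ : nrm p ≤ μ := by
        have := nrm_add_le ((1 - s) • z) (s • ζ)
        rw [← e1, nrm_smul, nrm_smul, abs_of_nonneg hs1, abs_of_nonneg hs.1.le] at this
        have i1 := mul_le_mul_of_nonneg_left (le_max_left (nrm z) (nrm ζ)) hs1
        have i2 := mul_le_mul_of_nonneg_left (le_max_right (nrm z) (nrm ζ)) hs.1.le
        rw [← hμdef] at i1 i2
        linarith
      have hd : |nrm p - μ| ≤ nrm (ζ - z) := by
        rcases max_choice (nrm z) (nrm ζ) with e | e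
        · rw [hμdef, e]
          refine (abs_nrm_sub_le p z).trans ?_
          rw [e3, nrm_smul, abs_of_nonneg hs.1.le]
          exact mul_le_of_le_one_left hn0 hs.2
        · rw [hμdef, e, abs_sub_comm]
          refine (abs_nrm_sub_le ζ p).trans ?_
          rw [e2, nrm_smul, abs_of_nonneg hs1]
          exact mul_le_of_le_one_left hn0 (by linarith [hs.1])
      rw [le_div_iff₀ hμ, Real.norm_eq_abs, w2m_eq]
      refine (rpow_lip (by linarith) (nrm_nonneg p) hμ.le hpμ le_rfl).trans ?_
      gcongr
    have := intervalIntegral.norm_integral_le_of_norm_le_const hpt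
    rw [intervalIntegral.integral_sub (cw.intervalIntegrable _ _) (by simp), ← hI,
      intervalIntegral.integral_const, sub_zero, one_smul, abs_one, mul_one, le_div_iff₀ hμ,
      Real.norm_eq_abs] at this
    exact this
  set r := (τ - t) + A * I with hr
  have hrb : |r| ≤ (1 + 4 * m) * μ ^ (2 * m) * N ^ 2 := by
    have e : r = μ ^ (2 * m) * ((τ - t) / μ ^ (2 * m) + A) + A * (I - μ ^ (2 * m)) := by
      rw [hr]; field_simp; ring
    have b1 : |μ ^ (2 * m) * ((τ - t) / μ ^ (2 * m) + A)| ≤ μ ^ (2 * m) * N ^ 2 := by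
      rw [abs_mul, abs_of_pos hQ]; gcongr
    have b2 : |A * (I - μ ^ (2 * m))| ≤ 4 * m * μ ^ (2 * m) * N ^ 2 := by
      rw [abs_mul]
      calc |A| * |I - μ ^ (2 * m)| ≤ 2 * μ * nrm (ζ - z) * |I - μ ^ (2 * m)| := by
            gcongr; exact abs_area_le (le_max_left _ _)
        _ = 2 * nrm (ζ - z) * (|I - μ ^ (2 * m)| * μ) := by ring
        _ ≤ 2 * nrm (ζ - z) * (2 * m * μ ^ (2 * m) * nrm (ζ - z)) := by gcongr
        _ = 4 * m * μ ^ (2 * m) * nrm (ζ - z) ^ 2 := by ring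
        _ ≤ _ := by gcongr
    rw [e]
    refine (abs_add_le _ _).trans ?_
    linarith
  have hlen : nrm (ζ - z) + (2 + 2 * (1 + 4 * m)) * N ≤ (5 + 8 * m) * N := by linarith
  rcases max_choice (nrm z) (nrm ζ) with e | e
  · rw [← hμdef] at e
    have c1 := conn_loop hm0 z t r (by rwa [← e]) hN (by rwa [← e])
    have c2 := c1.trans (conn_line hm0 z ζ (t + r))
    rw [← hI, ← hA, show t + r - A * I = τ by rw [hr]; ring] at c2
    exact c2.mono (by linarith)
  · rw [← hμdef] at e
    have c1 := conn_line hm0 z ζ t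
    rw [← hI, ← hA] at c1
    have c2 := c1.trans (conn_loop hm0 ζ (t - A * I) r (by rwa [← e]) hN (by rwa [← e]))
    rw [show t - A * I + r = τ by rw [hr]; ring] at c2
    exact c2.mono hlen

lemma conn_refl {m : ℝ} (hm : 1 ≤ m) (z : ℝ × ℝ) (t : ℝ) :
    Conn m (z.1, z.2, t) (z.1, z.2, t) 0 := by
  have h := conn_line (by linarith : 0 ≤ m) z z t
  rw [show z.1 * z.2 - z.2 * z.1 = 0 by ring] at h
  simpa [nrm] using h

/-- Restriction of the CC distance to the graph of an `m`-admissible function: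
`C₀⁻¹ d(p,q) ≤ |ζ−z| + |(φ(ζ)−φ(z))/μ^(2m) + (xη−yξ)|^(1/2) ≤ C₀ d(p,q)`,
where `μ = max{|z|,|ζ|}`, `p = (z,φ(z))`, `q = (ζ,φ(ζ))`. -/
theorem stmt14 (m Ca : ℝ) (hm : 1 ≤ m) (hCa : 0 < Ca) :
    ∃ C₀ : ℝ, 0 < C₀ ∧ ∀ φ : ℝ × ℝ → ℝ, Admissible m Ca φ →
      ∀ z ζ : ℝ × ℝ,
        C₀⁻¹ * ccDist m (z.1, z.2, φ z) (ζ.1, ζ.2, φ ζ) ≤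
            nrm (ζ - z) +
              |(φ ζ - φ z) / max (nrm z) (nrm ζ) ^ (2 * m) +
                (z.1 * ζ.2 - z.2 * ζ.1)| ^ ((1 : ℝ) / 2) ∧
        nrm (ζ - z) +
            |(φ ζ - φ z) / max (nrm z) (nrm ζ) ^ (2 * m) +
              (z.1 * ζ.2 - z.2 * ζ.1)| ^ ((1 : ℝ) / 2) ≤
          C₀ * ccDist m (z.1, z.2, φ z) (ζ.1, ζ.2, φ ζ) := by
  have hK : 0 ≤ lowC m Ca := by unfold lowC; positivity
  set K₁ := 2 + Real.sqrt (lowC m Ca) with hK₁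
  have hK₁pos : 0 < K₁ := by positivity
  have hC₀ : 0 < (5 + 8 * m) + K₁ := by positivity
  refine ⟨(5 + 8 * m) + K₁, hC₀, fun φ hφ z ζ => ?_⟩
  have hlip := phi_lip hm hCa hφ z ζ
  set μ := max (nrm z) (nrm ζ) with hμdef
  set θ := (φ ζ - φ z) / μ ^ (2 * m) + (z.1 * ζ.2 - z.2 * ζ.1) with hθ
  set N := nrm (ζ - z) + |θ| ^ ((1 : ℝ) / 2) with hN
  rw [← Real.sqrt_eq_rpow] at hN
  have hn0 := nrm_nonneg (ζ - z)
  have hθ0 := Real.sqrt_nonneg |θ|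
  have hN0 : 0 ≤ N := by rw [hN]; positivity
  -- the case `ζ = z` is separate because the loop needs `N > 0` and `μ > 0`
  have hconn : Conn m (z.1, z.2, φ z) (ζ.1, ζ.2, φ ζ) ((5 + 8 * m) * N) := by
    by_cases hz : ζ = z
    · subst hz
      exact (conn_refl hm ζ (φ ζ)).mono (by positivity)
    have hpos : 0 < nrm (ζ - z) := lt_of_le_of_ne hn0 fun h => hz (eq_of_nrm_sub h.symm)
    have hμ : 0 < μ := by
      by_contra hneg
      have e1 : nrm z ≤ 0 := (le_max_left _ _).trans (not_lt.1 hneg)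
      have e2 : nrm ζ ≤ 0 := (le_max_right _ _).trans (not_lt.1 hneg)
      have := nrm_add_le ζ ((-1 : ℝ) • z)
      rw [nrm_smul, show ζ + (-1 : ℝ) • z = ζ - z by module] at this
      norm_num at this
      linarith
    refine upper_bound hm (by linarith) (by linarith) hμ ?_
    change |θ| ≤ N ^ 2
    calc |θ| = Real.sqrt |θ| ^ 2 := (Real.sq_sqrt (abs_nonneg _)).symm
      _ ≤ N ^ 2 := by gcongr; linarith
  constructor
  · rw [inv_mul_le_iff₀ hC₀]
    refine hconn.ccDist_le.trans ?_
    exact mul_le_mul_of_nonneg_right (by linarith) hN0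
  · have hlow : N / K₁ ≤ ccDist m (z.1, z.2, φ z) (ζ.1, ζ.2, φ ζ) := by
      unfold ccDist
      apply le_csInf
      · obtain ⟨T, hT, γ, α, β, hh, h0, h1, -⟩ := hconn
        exact ⟨_, T, hT, γ, α, β, hh, h0, h1, rfl⟩
      · rintro _ ⟨T, hT, γ, α, β, hh, h0, h1, rfl⟩
        obtain ⟨b1, b2⟩ := lower_bound hm hCa hlip hT hh h0 h1
        have hL := ccLength_nonneg α β hT
        rw [div_le_iff₀' hK₁pos, hN, hK₁]
        have b3 : Real.sqrt |θ| ≤ Real.sqrt (lowC m Ca) * ccLength α β T := by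
          refine (Real.sqrt_le_sqrt b2).trans (le_of_eq ?_)
          rw [Real.sqrt_mul hK, Real.sqrt_sq hL]
        linarith
    rw [div_le_iff₀' hK₁pos] at hlow
    have hd : 0 ≤ ccDist m (z.1, z.2, φ z) (ζ.1, ζ.2, φ ζ) := by
      refine Real.sInf_nonneg ?_
      rintro _ ⟨T, hT, γ, α, β, -, -, -, rfl⟩
      exact ccLength_nonneg α β hT
    refine hlow.trans ?_
    exact mul_le_mul_of_nonneg_right (by linarith) hd
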